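/- Let W ⊂ P^2 be a line count configuration of type (c_1, c_2, …, c_t) over an algebraically closed field k of characteristic 0, where 1 ≤ c_1 ≤ c_2 ≤ ⋯ ≤ c_t and c_i ≥ i for all 1 ≤ i ≤ t. Then for every integer r ≥ 1, α(2rW) ≥ r·α(W) + r. -/

import Mathlib

open scoped LinearAlgebra.Projectivization

/-- The homogeneous ideal of a point `P` of `ℙ²`: all polynomials vanishing on the
line through the origin corresponding to `P`. -/
noncomputable def pointIdeal (k : Type*) [Field k] (P : ℙ k (Fin 3 → k)) :
    Ideal (MvPolynomial (Fin 3) k) where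
  carrier := {f | ∀ c : k, MvPolynomial.eval (c • P.rep) f = 0}
  zero_mem' := by intro c; simp
  add_mem' := by
    intro a b ha hb c
    simp [ha c, hb c]
  smul_mem' := by
    intro r f hf c
    simp [smul_eq_mul, hf c]

/-- The defining ideal `I_{mW} = ⋂_{P ∈ W} I_P^m` of the fat point scheme `mW`. -/
noncomputable def fatIdeal (k : Type*) [Field k] (W : Finset (ℙ k (Fin 3 → k))) (m : ℕ) :
    Ideal (MvPolynomial (Fin 3) k) :=
  ⨅ P ∈ W, (pointIdeal k P) ^ m

/-- `α(I)`: the least degree `d` such that `I` contains a nonzero homogeneous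
polynomial of degree `d`. -/
noncomputable def alphaDeg (k : Type*) [Field k] (I : Ideal (MvPolynomial (Fin 3) k)) : ℕ :=
  sInf {d : ℕ | ∃ f ∈ I, f ≠ 0 ∧ MvPolynomial.IsHomogeneous f d}

open MvPolynomial in
/-- A linear form is a linear combination of the variables. -/
theorem exists_eq_sum_smul_X_of_isHomogeneous_one {k σ : Type*} [Field k] [Fintype σ]
    {p : MvPolynomial σ k} (hp : p.IsHomogeneous 1) :
    ∃ a : σ → k, p = ∑ i, a i • X i := by
  have h : p ∈ homogeneousSubmodule σ k 1 := hp
  rw [homogeneousSubmodule_one_eq_span_X, Submodule.mem_span_range_iff_exists_fun] at h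
  obtain ⟨a, ha⟩ := h
  exact ⟨a, ha.symm⟩

/-- Evaluation of a linear form as a linear functional. -/
theorem exists_linearMap_of_isHomogeneous_one {k σ : Type*} [Field k] [Fintype σ]
    {p : MvPolynomial σ k} (hp : p.IsHomogeneous 1) :
    ∃ l : (σ → k) →ₗ[k] k, ∀ x, MvPolynomial.eval x p = l x := by
  obtain ⟨a, rfl⟩ := exists_eq_sum_smul_X_of_isHomogeneous_one hp
  refine ⟨∑ i, a i • LinearMap.proj i, fun x => ?_⟩
  simp [MvPolynomial.smul_eval]

theorem prime_of_isHomogeneous_one {k σ : Type*} [Field k]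
    {p : MvPolynomial σ k} (hp : p.IsHomogeneous 1) (h0 : p ≠ 0) : Prime p := by
  refine (MvPolynomial.irreducible_of_totalDegree_eq_one (hp.totalDegree h0) fun x hx => ?_).prime
  obtain ⟨d, hd⟩ := MvPolynomial.ne_zero_iff.mp h0
  rw [isUnit_iff_ne_zero]
  rintro rfl
  exact hd (zero_dvd_iff.mp (hx d))

/-- A cofactor of a linear form in a homogeneous polynomial is homogeneous. -/
theorem isHomogeneous_of_linear_mul {k σ : Type*} [Field k]
    {p q : MvPolynomial σ k} {d : ℕ} (hp : p.IsHomogeneous 1) (h0 : p * q ≠ 0)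
    (h : (p * q).IsHomogeneous d) : ∃ e, d = e + 1 ∧ q.IsHomogeneous e := by
  have hp0 : p ≠ 0 := left_ne_zero_of_mul h0
  have hq0 : q ≠ 0 := right_ne_zero_of_mul h0
  have hd := h.totalDegree h0
  rw [MvPolynomial.totalDegree_mul_of_isDomain hp0 hq0, hp.totalDegree hp0] at hd
  refine ⟨q.totalDegree, by omega, ?_⟩
  let := MvPolynomial.gradedAlgebra (σ := σ) (R := k)
  have key := DirectSum.coe_decompose_mul_add_of_left_mem
    (𝒜 := MvPolynomial.homogeneousSubmodule σ k) (i := 1) (j := q.totalDegree) (a := p) (b := q) hp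
  rw [hd, DirectSum.decompose_of_mem_same _ h] at key
  have hq := mul_left_cancel₀ hp0 key
  have hmem := SetLike.coe_mem
    (DirectSum.decompose (MvPolynomial.homogeneousSubmodule σ k) q q.totalDegree)
  rwa [← hq] at hmem

theorem eval_smul_of_isHomogeneous {k σ : Type*} [Field k]
    {p : MvPolynomial σ k} {d : ℕ} (hp : p.IsHomogeneous d) (b : k) (x : σ → k) :
    MvPolynomial.eval (b • x) p = b ^ d * MvPolynomial.eval x p := by
  rw [MvPolynomial.eval_eq, MvPolynomial.eval_eq, Finset.mul_sum]
  refine Finset.sum_congr rfl fun m hm => ?_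
  have hdeg := hp.degree_eq_sum_deg_support hm
  simp only [Pi.smul_apply, smul_eq_mul, mul_pow, Finset.prod_mul_distrib,
    Finset.prod_pow_eq_pow_sum]
  rw [hdeg]
  ring

/-- Restriction of a polynomial to the parametrized line `s ↦ v + s w`. -/
noncomputable def restrictLine {k σ : Type*} [Field k] (v w : σ → k) :
    MvPolynomial σ k →ₐ[k] Polynomial k :=
  MvPolynomial.aeval fun i => Polynomial.C (v i) + Polynomial.X * Polynomial.C (w i)

/-- Restriction of a polynomial to the generic parametrized line through `v`. -/
noncomputable def restrictGenericLine {k σ : Type*} [Field k] (v : σ → k) :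
    MvPolynomial σ k →ₐ[k] Polynomial (MvPolynomial σ k) :=
  MvPolynomial.aeval fun i =>
    Polynomial.C (MvPolynomial.C (v i)) + Polynomial.X * Polynomial.C (MvPolynomial.X i)

theorem map_restrictGenericLine {k σ : Type*} [Field k] (v w : σ → k) (p : MvPolynomial σ k) :
    Polynomial.map (MvPolynomial.eval w) (restrictGenericLine v p) = restrictLine v w p := by
  induction p using MvPolynomial.induction_on with
  | C a =>
    simp [restrictGenericLine, restrictLine, MvPolynomial.algebraMap_eq]
  | add p q hp hq => simp [hp, hq]
  | mul_X p i hp =>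
    rw [map_mul, map_mul, Polynomial.map_mul, hp]
    simp [restrictGenericLine, restrictLine]

theorem eval_restrictLine {k σ : Type*} [Field k] (v w : σ → k) (p : MvPolynomial σ k) (s : k) :
    (restrictLine v w p).eval s = MvPolynomial.eval (v + s • w) p := by
  induction p using MvPolynomial.induction_on with
  | C a => simp [restrictLine]
  | add p q hp hq => simp [hp, hq]
  | mul_X p i hp =>
    rw [map_mul, map_mul, Polynomial.eval_mul, hp]
    simp [restrictLine, mul_comm s]

theorem coeff_zero_restrictGenericLine {k σ : Type*} [Field k] (v : σ → k)
    (p : MvPolynomial σ k) :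
    (restrictGenericLine v p).coeff 0 = MvPolynomial.C (MvPolynomial.eval v p) := by
  induction p using MvPolynomial.induction_on with
  | C a => simp [restrictGenericLine, MvPolynomial.algebraMap_eq]
  | add p q hp hq => simp [hp, hq]
  | mul_X p i hp =>
    rw [map_mul, map_mul, Polynomial.mul_coeff_zero, hp]
    simp [restrictGenericLine]

theorem X_pow_dvd_of_mem_pointIdeal_pow {k : Type*} [Field k] {P : ℙ k (Fin 3 → k)} {m : ℕ}
    {F : MvPolynomial (Fin 3) k} (hF : F ∈ pointIdeal k P ^ m) :
    Polynomial.X ^ m ∣ restrictGenericLine P.rep F := by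
  have h1 : pointIdeal k P ≤
      (Ideal.span {Polynomial.X}).comap (restrictGenericLine P.rep) := by
    intro p hp
    rw [Ideal.mem_comap, Ideal.mem_span_singleton, Polynomial.X_dvd_iff,
      coeff_zero_restrictGenericLine]
    have := hp 1
    rw [one_smul] at this
    rw [this, map_zero]
  have h2 := (Ideal.pow_right_mono h1 m).trans (Ideal.le_comap_pow _ m) hF
  rwa [Ideal.mem_comap, Ideal.span_singleton_pow, Ideal.mem_span_singleton] at h2

/-- Dividing by a linear form lowers the multiplicity at a point by at most one, and does not
lower it at a point where the form does not vanish. -/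
theorem X_pow_dvd_of_linear_mul {k σ : Type*} [Field k] [Fintype σ]
    {p q : MvPolynomial σ k} (hp : p.IsHomogeneous 1) (h0 : p ≠ 0) (v : σ → k) {m : ℕ}
    (h : Polynomial.X ^ m ∣ restrictGenericLine v (p * q)) :
    Polynomial.X ^ (m - 1) ∣ restrictGenericLine v q ∧
      (MvPolynomial.eval v p ≠ 0 → Polynomial.X ^ m ∣ restrictGenericLine v q) := by
  have hX : Prime (Polynomial.X : Polynomial (MvPolynomial σ k)) := Polynomial.prime_X
  have hform : restrictGenericLine v p =
      Polynomial.C (MvPolynomial.C (MvPolynomial.eval v p)) + Polynomial.X * Polynomial.C p := by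
    obtain ⟨a, rfl⟩ := exists_eq_sum_smul_X_of_isHomogeneous_one hp
    simp only [map_sum, map_smul, restrictGenericLine, MvPolynomial.aeval_X, smul_add,
      Finset.sum_add_distrib, MvPolynomial.smul_eval, MvPolynomial.eval_X, Finset.mul_sum]
    congr 1
    · refine Finset.sum_congr rfl fun i _ => ?_
      rw [map_mul, map_mul, Polynomial.smul_C, MvPolynomial.smul_eq_C_mul, map_mul]
    · refine Finset.sum_congr rfl fun i _ => ?_
      rw [← Polynomial.smul_C, mul_smul_comm]
  rw [map_mul] at h
  refine ⟨?_, fun hv => hX.pow_dvd_of_dvd_mul_left m (fun hd => hv ?_) h⟩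
  · by_cases hv : MvPolynomial.eval v p = 0
    · rcases m with _ | m
      · simp
      rw [hform, hv, map_zero, map_zero, zero_add, pow_succ', mul_assoc] at h
      refine hX.pow_dvd_of_dvd_mul_left m (fun hd => h0 ?_)
        ((mul_dvd_mul_iff_left hX.ne_zero).mp h)
      simpa [Polynomial.X_dvd_iff] using hd
    · refine (pow_dvd_pow _ (Nat.sub_le m 1)).trans
        (hX.pow_dvd_of_dvd_mul_left m (fun hd => hv ?_) h)
      simpa [Polynomial.X_dvd_iff, coeff_zero_restrictGenericLine] using hd
  · simpa [Polynomial.X_dvd_iff, coeff_zero_restrictGenericLine] using hd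

theorem natDegree_restrictLine_le {k σ : Type*} [Field k] {d : ℕ} {p : MvPolynomial σ k}
    (hp : p.IsHomogeneous d) (v w : σ → k) : (restrictLine v w p).natDegree ≤ d := by
  have := MvPolynomial.aeval_natDegree_le p hp.totalDegree_le
    (fun i => Polynomial.C (v i) + Polynomial.X * Polynomial.C (w i)) (n := 1) fun i => by
      compute_degree
  simpa [restrictLine] using this

/-- If `b • (v + a • z)` is a point of multiplicity `m`, then `a` is a root of multiplicity `m`
of the restriction to the line `s ↦ v + s z`. -/
theorem X_sub_C_pow_dvd_restrictLine {k σ : Type*} [Field k] [Infinite k] {d m : ℕ}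
    {F : MvPolynomial σ k} (hF : F.IsHomogeneous d) {u v z : σ → k} {a b : k} (hb : b ≠ 0)
    (hu : u = b • (v + a • z)) (h : Polynomial.X ^ m ∣ restrictGenericLine u F) :
    (Polynomial.X - Polynomial.C a) ^ m ∣ restrictLine v z F := by
  have h1 : Polynomial.X ^ m ∣ restrictLine u (b • z) F := by
    rw [← map_restrictGenericLine]
    simpa using Polynomial.map_dvd (MvPolynomial.eval (b • z)) h
  have h2 : (restrictLine u (b • z) F).comp (Polynomial.X - Polynomial.C a) =
      Polynomial.C (b ^ d) * restrictLine v z F := by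
    refine Polynomial.funext fun s => ?_
    simp only [Polynomial.eval_comp, Polynomial.eval_sub, Polynomial.eval_X, Polynomial.eval_C,
      Polynomial.eval_mul, eval_restrictLine]
    rw [← eval_smul_of_isHomogeneous hF, hu]
    congr 2
    module
  obtain ⟨g, hg⟩ := h1
  rw [hg, Polynomial.mul_comp, Polynomial.X_pow_comp] at h2
  have h3 : IsUnit (Polynomial.C (b ^ d)) := Polynomial.isUnit_C.mpr (pow_ne_zero d hb).isUnit
  exact h3.dvd_mul_left.mp ⟨_, h2.symm⟩

/-- In the kernel of a nonzero functional on `k³`, two independent vectors span. -/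
theorem exists_eq_add_smul_of_mem_ker {k : Type*} [Field k] (l : (Fin 3 → k) →ₗ[k] k)
    (hl : l ≠ 0) {u v z : Fin 3 → k} (hu : l u = 0) (hv : l v = 0) (hz : l z = 0)
    (hind : LinearIndependent k ![v, z]) : ∃ a b : k, u = a • v + b • z := by
  by_contra hcon
  have hnot : u ∉ Submodule.span k (Set.range ![v, z]) := by
    intro hm
    rw [Matrix.range_cons, Matrix.range_cons, Matrix.range_empty, Set.union_empty,
      Set.singleton_union, Submodule.mem_span_pair] at hm
    obtain ⟨a, b, h⟩ := hm
    exact hcon ⟨a, b, h.symm⟩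
  have h3 : LinearIndependent k ![u, v, z] := linearIndependent_finCons.mpr ⟨hind, hnot⟩
  have hspan := h3.span_eq_top_of_card_eq_finrank' (by simp)
  refine hl (LinearMap.ext_on_range hspan fun i => ?_)
  fin_cases i <;> simp [hu, hv, hz]

/-- Bézout for a line: a form of degree `d` with at least `c` points of multiplicity `m` on a
line, where `d < c m`, is divisible by the equation of the line. -/
theorem linear_dvd_of_lt_card_mul {k : Type*} [Field k] [IsAlgClosed k]
    {p F : MvPolynomial (Fin 3) k} {d m : ℕ} (hp : p.IsHomogeneous 1) (h0 : p ≠ 0)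
    (hF : F.IsHomogeneous d) (T : Finset (ℙ k (Fin 3 → k)))
    (hT : ∀ P ∈ T, MvPolynomial.eval P.rep p = 0)
    (hm : ∀ P ∈ T, Polynomial.X ^ m ∣ restrictGenericLine P.rep F)
    (hd : d < T.card * m) : p ∣ F := by
  have : Infinite k := IsAlgClosed.instInfinite
  obtain ⟨l, hl⟩ := exists_linearMap_of_isHomogeneous_one hp
  have hl0 : l ≠ 0 := by
    rintro rfl
    exact h0 (MvPolynomial.funext fun x => by simp [hl])
  have hm0 : m ≠ 0 := by rintro rfl; simp at hd
  have hTne : T.Nonempty := by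
    rw [Finset.nonempty_iff_ne_empty]
    rintro rfl
    simp at hd
  obtain ⟨P, hP⟩ := hTne
  have hvanish : ∀ z, l z = 0 → MvPolynomial.eval z F = 0 := by
    intro z hz
    by_cases hprop : ∃ Q ∈ T, ∃ b : k, b • Q.rep = z
    · obtain ⟨Q, hQ, b, rfl⟩ := hprop
      have h1 := (dvd_pow_self _ hm0).trans (hm Q hQ)
      rw [Polynomial.X_dvd_iff, coeff_zero_restrictGenericLine, MvPolynomial.C_eq_zero] at h1
      rw [eval_smul_of_isHomogeneous hF, h1, mul_zero]
    push Not at hprop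
    have hlT : ∀ Q ∈ T, l Q.rep = 0 := fun Q hQ => by rw [← hl]; exact hT Q hQ
    have hind : LinearIndependent k ![P.rep, z] :=
      (LinearIndependent.pair_iff' P.rep_nonzero).mpr (hprop P hP)
    have hcoord : ∀ Q ∈ T, ∃ a b : k, b ≠ 0 ∧ Q.rep = b • (P.rep + a • z) := by
      intro Q hQ
      obtain ⟨b, a, hab⟩ := exists_eq_add_smul_of_mem_ker l hl0 (hlT Q hQ) (hlT P hP) hz hind
      have hb : b ≠ 0 := by
        rintro rfl
        rw [zero_smul, zero_add] at hab
        have ha : a ≠ 0 := by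
          rintro rfl
          exact Q.rep_nonzero (by simpa using hab)
        exact hprop Q hQ a⁻¹ (by rw [hab, inv_smul_smul₀ ha])
      refine ⟨b⁻¹ * a, b, hb, ?_⟩
      rw [hab, smul_add, smul_smul, mul_inv_cancel_left₀ hb]
    choose! a b hb hab using hcoord
    have hinj : Set.InjOn a T := by
      intro Q hQ Q' hQ' h
      rw [← Q.mk_rep, ← Q'.mk_rep, Projectivization.mk_eq_mk_iff']
      refine ⟨b Q * (b Q')⁻¹, ?_⟩
      rw [hab Q hQ, hab Q' hQ', h, mul_smul, inv_smul_smul₀ (hb Q' hQ')]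
    have hdvd : ∏ Q ∈ T, (Polynomial.X - Polynomial.C (a Q)) ^ m ∣
        restrictLine P.rep z F := by
      refine Finset.prod_dvd_of_coprime (fun Q hQ Q' hQ' hne => ?_) fun Q hQ =>
        X_sub_C_pow_dvd_restrictLine hF (hb Q hQ) (hab Q hQ) (hm Q hQ)
      exact (Polynomial.isCoprime_X_sub_C_of_isUnit_sub
        (sub_ne_zero_of_ne fun h => hne (hinj hQ hQ' h)).isUnit).pow
    have hzero : restrictLine P.rep z F = 0 := by
      refine Polynomial.eq_zero_of_dvd_of_natDegree_lt hdvd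
        ((natDegree_restrictLine_le hF _ _).trans_lt ?_)
      rw [Polynomial.natDegree_prod_of_monic _ _ fun Q _ => (Polynomial.monic_X_sub_C _).pow m]
      simpa using hd
    have hflip : restrictLine z P.rep F = 0 := by
      refine Polynomial.eq_zero_of_infinite_isRoot _
        ((Set.finite_singleton (0 : k)).infinite_compl.mono fun s hs => ?_)
      have hs0 : s ≠ 0 := hs
      have h1 := congrArg (Polynomial.eval s⁻¹) hzero
      rw [eval_restrictLine, Polynomial.eval_zero] at h1
      rw [Set.mem_ofPred_eq, Polynomial.IsRoot, eval_restrictLine,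
        show z + s • P.rep = s • (P.rep + s⁻¹ • z) by rw [smul_add, smul_inv_smul₀ hs0, add_comm],
        eval_smul_of_isHomogeneous hF, h1, mul_zero]
    simpa [eval_restrictLine] using congrArg (Polynomial.eval 0) hflip
  have hprime : (Ideal.span {p}).IsPrime :=
    (Ideal.span_singleton_prime h0).mpr (prime_of_isHomogeneous_one hp h0)
  rw [← Ideal.mem_span_singleton,
    ← MvPolynomial.IsPrime.vanishingIdeal_zeroLocus (K := k) (Ideal.span {p})]
  intro x hx
  have hxp := hx p (Ideal.mem_span_singleton_self p)
  rw [MvPolynomial.aeval_eq_eval] at hxp ⊢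
  exact hvanish x ((hl x).symm.trans hxp)

/-- The weighted sum of the multiplicities along the lines is at most `t` times the degree. -/
theorem sum_mul_le_of_multiplicities {k : Type*} [Field k] [IsAlgClosed k] {t : ℕ}
    (T : Fin t → Finset (ℙ k (Fin 3 → k))) (φ : Fin t → MvPolynomial (Fin 3) k)
    (hci : ∀ i : Fin t, (i : ℕ) + 1 ≤ (T i).card)
    (hhom : ∀ i, (φ i).IsHomogeneous 1) (hne : ∀ i, φ i ≠ 0)
    (honline : ∀ i, ∀ P ∈ T i, MvPolynomial.eval P.rep (φ i) = 0)
    (hone : ∀ i j, i ≠ j → ∀ P ∈ T i, MvPolynomial.eval P.rep (φ j) ≠ 0)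
    (d : ℕ) (m : Fin t → ℕ) (F : MvPolynomial (Fin 3) k) (hF0 : F ≠ 0)
    (hF : F.IsHomogeneous d)
    (hm : ∀ i, ∀ P ∈ T i, Polynomial.X ^ m i ∣ restrictGenericLine P.rep F) :
    ∑ i : Fin t, ((i : ℕ) + 1) * m i ≤ t * d := by
  induction d generalizing m F with
  | zero =>
    have hle : ∀ i : Fin t, ((i : ℕ) + 1) * m i ≤ 0 := by
      intro i
      by_contra! hlt
      obtain ⟨G, rfl⟩ := linear_dvd_of_lt_card_mul (hhom i) (hne i) hF (T i) (honline i) (hm i)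
        (hlt.trans_le (Nat.mul_le_mul_right _ (hci i)))
      obtain ⟨e, he, -⟩ := isHomogeneous_of_linear_mul (hhom i) hF0 hF
      omega
    simpa using Finset.sum_le_sum fun i (_ : i ∈ Finset.univ) => hle i
  | succ d ih =>
    by_cases hle : ∀ i : Fin t, ((i : ℕ) + 1) * m i ≤ d + 1
    · simpa using Finset.sum_le_sum fun i (_ : i ∈ Finset.univ) => hle i
    push Not at hle
    obtain ⟨i, hlt⟩ := hle
    obtain ⟨G, rfl⟩ := linear_dvd_of_lt_card_mul (hhom i) (hne i) hF (T i) (honline i) (hm i)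
      (hlt.trans_le (Nat.mul_le_mul_right _ (hci i)))
    obtain ⟨e, he, hG⟩ := isHomogeneous_of_linear_mul (hhom i) hF0 hF
    obtain rfl : d = e := by omega
    have hmi : m i ≠ 0 := by
      intro h
      simp [h] at hlt
    have key := ih (Function.update m i (m i - 1)) G (right_ne_zero_of_mul hF0) hG (by
      intro j P hP
      have hdiv := X_pow_dvd_of_linear_mul (hhom i) (hne i) P.rep (hm j P hP)
      by_cases hji : j = i
      · subst hji
        simpa using hdiv.1
      · rw [Function.update_of_ne hji]
        exact hdiv.2 (hone j i hji P hP))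
    rw [← Finset.add_sum_erase _ _ (Finset.mem_univ i)] at key ⊢
    rw [Function.update_self, Finset.sum_congr rfl fun j hj => by
      rw [Function.update_of_ne (Finset.ne_of_mem_erase hj)]] at key
    obtain ⟨n, hn⟩ := Nat.exists_eq_succ_of_ne_zero hmi
    rw [hn] at key ⊢
    have hit := i.isLt
    simp only [Nat.succ_eq_add_one, Nat.add_sub_cancel] at key ⊢
    nlinarith

theorem stmt19 (k : Type*) [Field k] [IsAlgClosed k] [CharZero k]
    (t : ℕ) (ht : 0 < t)
    (c : Fin t → ℕ) (hc1 : ∀ i, 1 ≤ c i) (hcmono : Monotone c)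
    (hci : ∀ i : Fin t, (i : ℕ) + 1 ≤ c i)
    (W : Finset (ℙ k (Fin 3 → k)))
    (T : Fin t → Finset (ℙ k (Fin 3 → k)))
    (φ : Fin t → MvPolynomial (Fin 3) k)
    (hhom : ∀ i, (φ i).IsHomogeneous 1)
    (hne : ∀ i, φ i ≠ 0)
    (hprop : ∀ i j, i ≠ j → ∀ a : k, φ i ≠ a • φ j)
    (hW : ∀ P, P ∈ W ↔ ∃ i, P ∈ T i)
    (hcard : ∀ i : Fin t, (T i).card = c i)
    (honline : ∀ i, ∀ P ∈ T i, MvPolynomial.eval (Projectivization.rep P) (φ i) = 0)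
    (hone : ∀ P ∈ W, ∀ i j : Fin t, i ≠ j →
      ¬(MvPolynomial.eval (Projectivization.rep P) (φ i) = 0 ∧
        MvPolynomial.eval (Projectivization.rep P) (φ j) = 0))
    (r : ℕ) (hr : 1 ≤ r) :
    r * alphaDeg k (fatIdeal k W 1) + r ≤ alphaDeg k (fatIdeal k W (2 * r)) := by
  have hlin : ∀ i, ∀ P ∈ T i, φ i ∈ pointIdeal k P := fun i P hP a => by
    rw [eval_smul_of_isHomogeneous (hhom i), honline i P hP, mul_zero]
  have hprod_mem : ∏ i, φ i ∈ fatIdeal k W 1 := by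
    simp only [fatIdeal, Submodule.mem_iInf, pow_one]
    intro P hP
    obtain ⟨i, hi⟩ := (hW P).mp hP
    exact Ideal.mem_of_dvd _ (Finset.dvd_prod_of_mem φ (Finset.mem_univ i)) (hlin i P hi)
  have hprod_hom : (∏ i, φ i).IsHomogeneous t := by
    simpa using MvPolynomial.IsHomogeneous.prod Finset.univ φ (fun _ => 1) fun i _ => hhom i
  have hprod_ne : ∏ i, φ i ≠ 0 := Finset.prod_ne_zero_iff.mpr fun i _ => hne i
  have hα : alphaDeg k (fatIdeal k W 1) ≤ t := Nat.sInf_le ⟨_, hprod_mem, hprod_ne, hprod_hom⟩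
  have hnonempty : {d : ℕ | ∃ f ∈ fatIdeal k W (2 * r), f ≠ 0 ∧
      MvPolynomial.IsHomogeneous f d}.Nonempty := by
    refine ⟨_, (∏ i, φ i) ^ (2 * r), ?_, pow_ne_zero _ hprod_ne, hprod_hom.pow _⟩
    simp only [fatIdeal, Submodule.mem_iInf, pow_one] at hprod_mem ⊢
    exact fun P hP => Ideal.pow_mem_pow (hprod_mem P hP) _
  obtain ⟨F, hFmem, hF0, hF⟩ := Nat.sInf_mem hnonempty
  change F.IsHomogeneous (alphaDeg k (fatIdeal k W (2 * r))) at hF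
  simp only [fatIdeal, Submodule.mem_iInf] at hFmem
  have key := sum_mul_le_of_multiplicities T φ (fun i => (hci i).trans_eq (hcard i).symm) hhom hne
    honline (fun i j hij P hP hj => hone P ((hW P).mpr ⟨i, hP⟩) i j hij ⟨honline i P hP, hj⟩)
    _ (fun _ => 2 * r) F hF0 hF
    fun i P hP => X_pow_dvd_of_mem_pointIdeal_pow (hFmem P ((hW P).mpr ⟨i, hP⟩))
  have hsum : ∑ i : Fin t, ((i : ℕ) + 1) * (2 * r) = t * (r * t + r) := by
    have hgauss := Finset.sum_range_id_mul_two (t + 1)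
    rw [Finset.sum_range_succ'] at hgauss
    rw [← Finset.sum_mul, Fin.sum_univ_eq_sum_range (fun i => i + 1) t]
    simp only [add_zero, Nat.add_sub_cancel] at hgauss
    rw [← mul_assoc, hgauss]
    ring
  rw [hsum] at key
  exact (Nat.add_le_add_right (Nat.mul_le_mul_left r hα) r).trans (Nat.le_of_mul_le_mul_left key ht)
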